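/- Define sets X_k ⊆ ℂ^(2^k) recursively by X_1 = {|0⟩, (|0⟩ + |1⟩)/√2} and X_{k+1} = {|0⟩⊗v : v ∈ X_k} ∪ {(1/√2)·(|0⟩⊗v + |1⟩⊗(X^{a_k} ⊗ ⋯ ⊗ X^{a_1})v) : v ∈ X_k, (a_1,…,a_k) ∈ {0,1}^k}, where X^0 = I and X^1 = X. Then for every n ≥ 1, X_n equals the set {|V⟩ : V a subgroup of ({0,1}^n, bitwise XOR)}. -/

import Mathlib

open Matrix

noncomputable section

/-- The single-qubit Pauli matrices. -/
def pauliI : Matrix (Fin 2) (Fin 2) ℂ := 1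
def pauliX : Matrix (Fin 2) (Fin 2) ℂ := !![0, 1; 1, 0]
def pauliY : Matrix (Fin 2) (Fin 2) ℂ := !![0, -Complex.I; Complex.I, 0]
def pauliZ : Matrix (Fin 2) (Fin 2) ℂ := !![1, 0; 0, -1]

/-- Kronecker product of a `2 × 2` matrix (most significant qubit) with a
`2^m × 2^m` matrix, indexed by `Fin (2^(m+1))`. -/
def kron {m : ℕ} (A : Matrix (Fin 2) (Fin 2) ℂ) (B : Matrix (Fin (2 ^ m)) (Fin (2 ^ m)) ℂ) :
    Matrix (Fin (2 ^ (m + 1))) (Fin (2 ^ (m + 1))) ℂ := fun i j =>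
  A (if (i : ℕ) < 2 ^ m then 0 else 1) (if (j : ℕ) < 2 ^ m then 0 else 1) *
    B ⟨(i : ℕ) % 2 ^ m, Nat.mod_lt _ (pow_pos (by norm_num) m)⟩
      ⟨(j : ℕ) % 2 ^ m, Nat.mod_lt _ (pow_pos (by norm_num) m)⟩

/-- `IsPauliString n M` holds iff `M` is a Kronecker product of `n` single-qubit
Pauli matrices. -/
def IsPauliString : (n : ℕ) → Matrix (Fin (2 ^ n)) (Fin (2 ^ n)) ℂ → Prop
  | 0, M => M = 1
  | n + 1, M => ∃ Q ∈ ({pauliI, pauliX, pauliY, pauliZ} : Set (Matrix (Fin 2) (Fin 2) ℂ)),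
      ∃ B, IsPauliString n B ∧ M = kron Q B

/-- An `n`-qubit Pauli LIM: a nonzero scalar multiple of an `n`-qubit Pauli string. -/
def IsPauliLIM (n : ℕ) (A : Matrix (Fin (2 ^ n)) (Fin (2 ^ n)) ℂ) : Prop :=
  ∃ (c : ℂ) (P : Matrix (Fin (2 ^ n)) (Fin (2 ^ n)) ℂ),
    c ≠ 0 ∧ IsPauliString n P ∧ A = c • P

/-- The stabilizer set of a vector: all `n`-qubit Pauli LIMs fixing `φ`. -/
def PauliStab {n : ℕ} (φ : Fin (2 ^ n) → ℂ) : Set (Matrix (Fin (2 ^ n)) (Fin (2 ^ n)) ℂ) :=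
  {A | IsPauliLIM n A ∧ A.mulVec φ = φ}

/-- Two vectors are Pauli-isomorphic if some Pauli LIM maps one to the other. -/
def PauliIso {n : ℕ} (φ ψ : Fin (2 ^ n) → ℂ) : Prop :=
  ∃ A, IsPauliLIM n A ∧ A.mulVec φ = ψ

/-- Membership in the `n`-qubit Pauli group: `i^k · P` with `P` a Pauli string. -/
def InPauliGroup (n : ℕ) (A : Matrix (Fin (2 ^ n)) (Fin (2 ^ n)) ℂ) : Prop :=
  ∃ (k : Fin 4) (P : Matrix (Fin (2 ^ n)) (Fin (2 ^ n)) ℂ),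
    IsPauliString n P ∧ A = (Complex.I ^ (k : ℕ)) • P

/-- The vector `|0⟩⊗φ₀ + |1⟩⊗φ₁`: first `2^m` coordinates are `φ₀`, last are `φ₁`. -/
def dirac {m : ℕ} (φ₀ φ₁ : Fin (2 ^ m) → ℂ) : Fin (2 ^ (m + 1)) → ℂ := fun i =>
  if h : (i : ℕ) < 2 ^ m then φ₀ ⟨i, h⟩
  else φ₁ ⟨(i : ℕ) - 2 ^ m, by
    have h1 := i.isLt
    have h2 : (2 : ℕ) ^ (m + 1) = 2 ^ m + 2 ^ m := by rw [pow_succ]; omega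
    omega⟩

/-- An `n`-qubit stabilizer state: a unit vector stabilized by exactly `2^n`
elements of the Pauli group. -/
def IsStabilizerState (n : ℕ) (φ : Fin (2 ^ n) → ℂ) : Prop :=
  (∑ i, Complex.normSq (φ i)) = 1 ∧
    Set.ncard {A : Matrix (Fin (2 ^ n)) (Fin (2 ^ n)) ℂ |
      InPauliGroup n A ∧ A.mulVec φ = φ} = 2 ^ n

/-- The standard Hermitian inner product on `ℂ^N`. -/
def hinner {N : ℕ} (φ ψ : Fin N → ℂ) : ℂ :=
  ∑ i, (starRingEnd ℂ) (φ i) * ψ i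



/-- `Z^{a_m} ⊗ ⋯ ⊗ Z^{a_1}` (the `j`-th tensor factor is `Z` iff `a j = true`). -/
def zString : (m : ℕ) → (Fin m → Bool) → Matrix (Fin (2 ^ m)) (Fin (2 ^ m)) ℂ
  | 0, _ => 1
  | m + 1, a => kron (if a (Fin.last m) then pauliZ else 1) (zString m (fun j => a j.castSucc))

open Classical in
/-- Number of edges of `G` with both endpoints in the set of vertices
`j` with `x.testBit j = true`. -/
def edgeCount {n : ℕ} (G : SimpleGraph (Fin n)) (x : ℕ) : ℕ :=
  (Finset.univ.filter (fun p : Fin n × Fin n =>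
    p.1 < p.2 ∧ G.Adj p.1 p.2 ∧ x.testBit p.1.val = true ∧ x.testBit p.2.val = true)).card

/-- The graph state of a simple graph on vertices `{0, …, n-1}`; vertex `j`
corresponds to the `j`-th bit of the basis-state index. -/
def graphState {n : ℕ} (G : SimpleGraph (Fin n)) : Fin (2 ^ n) → ℂ :=
  fun x => (-1 : ℂ) ^ edgeCount G (x : ℕ) / Real.sqrt (2 ^ n)

/-- The subfunction of `f` of order `ℓ` obtained by fixing the first `ℓ`
arguments to `a`. -/
def subfun {N : ℕ} (f : (Fin N → Bool) → ℂ) (ℓ : ℕ) (a : Fin ℓ → Bool) :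
    (Fin (N - ℓ) → Bool) → ℂ := fun x =>
  f (fun i => if h : (i : ℕ) < ℓ then a ⟨i, h⟩
      else x ⟨(i : ℕ) - ℓ, by have := i.isLt; omega⟩)

/-- A strong matching: a set of pairwise vertex-disjoint edges of `G` such that
every edge of `G` with both endpoints among the matched vertices is in `M`. -/
def IsStrongMatching {V : Type*} (G : SimpleGraph V) (M : Set (Sym2 V)) : Prop :=
  M ⊆ G.edgeSet ∧
  (∀ e₁ ∈ M, ∀ e₂ ∈ M, e₁ ≠ e₂ → ∀ v, v ∈ e₁ → v ∉ e₂) ∧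
  (∀ e ∈ G.edgeSet, (∀ v ∈ e, ∃ e' ∈ M, v ∈ e') → e ∈ M)

/-- An `(S,T)`-strong matching: a strong matching each of whose edges has one
endpoint in `S` and the other in `T`. -/
def IsSTStrongMatching {V : Type*} (G : SimpleGraph V) (S T : Set V) (M : Set (Sym2 V)) : Prop :=
  IsStrongMatching G M ∧ ∀ e ∈ M, ∃ u ∈ S, ∃ w ∈ T, e = s(u, w)

/-- The `n × n` grid graph. -/
def gridGraph (n : ℕ) : SimpleGraph (Fin n × Fin n) :=
  SimpleGraph.fromRel (fun u v =>
    (u.1 = v.1 ∧ (u.2 : ℕ) + 1 = (v.2 : ℕ)) ∨ (u.2 = v.2 ∧ (u.1 : ℕ) + 1 = (v.1 : ℕ)))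

/-- The amplitude function of the graph state of `G`, on assignments `V → Bool`. -/
def ampGraphState {V : Type*} [Fintype V] (G : SimpleGraph V) (x : V → Bool) : ℂ :=
  (-1 : ℂ) ^ Set.ncard {e ∈ G.edgeSet | ∀ v ∈ e, x v = true} / Real.sqrt (2 ^ Fintype.card V)

open Classical in
/-- The coset state of `C ⊆ {0,…,2^n − 1}`: the uniform superposition over `C`. -/
def cosetState (n : ℕ) (C : Set ℕ) : Fin (2 ^ n) → ℂ :=
  fun x => if (x : ℕ) ∈ C then 1 / Real.sqrt (C.ncard) else 0


/-- `X^{a_m} ⊗ ⋯ ⊗ X^{a_1}` (the `j`-th tensor factor is `X` iff `a j = true`). -/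
def xString : (m : ℕ) → (Fin m → Bool) → Matrix (Fin (2 ^ m)) (Fin (2 ^ m)) ℂ
  | 0, _ => 1
  | m + 1, a => kron (if a (Fin.last m) then pauliX else 1) (xString m (fun j => a j.castSucc))

/-- The states represented by Tower `⟨X⟩`-LIMDDs: `X_1 = {|0⟩, (|0⟩+|1⟩)/√2}` and
`X_{k+1}` is built from `X_k` by the tower construction with `X`-string labels. -/
def Xset : (k : ℕ) → Set (Fin (2 ^ k) → ℂ)
  | 0 => ∅
  | 1 => {(fun i => if (i : ℕ) = 0 then 1 else 0 : Fin (2 ^ 1) → ℂ),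
      fun _ => (Real.sqrt 2 : ℂ)⁻¹}
  | k + 2 => {w | ∃ v ∈ Xset (k + 1), w = dirac v 0} ∪
      {w | ∃ v ∈ Xset (k + 1), ∃ a : Fin (k + 1) → Bool,
        w = (Real.sqrt 2 : ℂ)⁻¹ • dirac v ((xString (k + 1) a).mulVec v)}

/-!
Encode bit strings as naturals. The string `X^a` translates basis states by `a`, so the tower
construction turns `|V⟩` into `|V⟩` again (with a leading zero bit) or into `|V ∪ (t ⊕ V)⟩` with
`t = 1a`. Conversely a subgroup `W` of `{0,1}^(m+1)` either lies in `{0,1}^m` or contains some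
`t = 1a`, and then `W = V ∪ (t ⊕ V)` for `V = W ∩ {0,1}^m`. So both families obey the same
recursion, and they agree at the start: the one-qubit states arise by the same step from the scalar
`1`, which is the coset state of the trivial group for zero qubits.
-/

/-- `V` is a subgroup of `{0,1}^n` under bitwise XOR, bit strings being encoded as naturals below
`2 ^ n`. Inverses are automatic, since every element is its own inverse. -/
structure IsXorSubgroup (n : ℕ) (V : Set ℕ) : Prop where
  lt_two_pow : ∀ x ∈ V, x < 2 ^ n
  zero_mem : 0 ∈ V
  xor_mem : ∀ a ∈ V, ∀ b ∈ V, a ^^^ b ∈ V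

/-- The union of `V` and its XOR-translate by `t`; for a XOR-subgroup `V` this is the subgroup
generated by `V` and `t`. -/
def xorAdjoin (V : Set ℕ) (t : ℕ) : Set ℕ := V ∪ Equiv.xor t '' V

/-- The coset states of all XOR-subgroups of `{0,1}^n`. -/
def subgroupCosetStates (n : ℕ) : Set (Fin (2 ^ n) → ℂ) :=
  cosetState n '' {V | IsXorSubgroup n V}

/-- The operation on sets of states that defines the recursion of `Xset`, made available for an
arbitrary set of states on any number of qubits, including zero. -/
def towerStep {m : ℕ} (S : Set (Fin (2 ^ m) → ℂ)) : Set (Fin (2 ^ (m + 1)) → ℂ) :=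
  {w | ∃ v ∈ S, w = dirac v 0} ∪
    {w | ∃ v ∈ S, ∃ a : Fin m → Bool,
      w = (Real.sqrt 2 : ℂ)⁻¹ • dirac v ((xString m a).mulVec v)}

section Bits

variable {m x y : ℕ}

theorem two_pow_le_iff_testBit (hx : x < 2 ^ (m + 1)) : 2 ^ m ≤ x ↔ x.testBit m = true :=
  ⟨fun h => Nat.testBit_of_two_pow_le_and_two_pow_add_one_gt h hx, Nat.ge_two_pow_of_testBit⟩

theorem eq_iff_testBit_eq_and_mod_eq (hx : x < 2 ^ (m + 1)) (hy : y < 2 ^ (m + 1)) :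
    x = y ↔ x.testBit m = y.testBit m ∧ x % 2 ^ m = y % 2 ^ m := by
  refine ⟨by rintro rfl; exact ⟨rfl, rfl⟩, fun ⟨htop, hlow⟩ => ?_⟩
  rw [← Nat.mod_eq_of_lt hx, ← Nat.mod_eq_of_lt hy, Nat.mod_pow_succ, Nat.mod_pow_succ,
    ← Nat.toNat_testBit, htop, Nat.toNat_testBit, hlow]

theorem two_pow_add_xor (hx : x < 2 ^ m) (hy : y < 2 ^ m) :
    (2 ^ m + x) ^^^ y = 2 ^ m + (x ^^^ y) := by
  have hdiv : ((2 ^ m + x) ^^^ y) / 2 ^ m = 1 := by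
    rw [Nat.xor_div_two_pow, Nat.add_div_left _ (Nat.two_pow_pos m), Nat.div_eq_of_lt hx,
      Nat.div_eq_of_lt hy, Nat.xor_zero]
  have hmod : ((2 ^ m + x) ^^^ y) % 2 ^ m = x ^^^ y := by
    rw [Nat.xor_mod_two_pow, Nat.add_mod_left, Nat.mod_eq_of_lt hx, Nat.mod_eq_of_lt hy]
  rw [← Nat.div_add_mod ((2 ^ m + x) ^^^ y) (2 ^ m), hdiv, hmod, mul_one]

theorem xor_lt_two_pow_of_two_pow_le (hx : 2 ^ m ≤ x) (hx' : x < 2 ^ (m + 1))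
    (hy : 2 ^ m ≤ y) (hy' : y < 2 ^ (m + 1)) : x ^^^ y < 2 ^ m := by
  by_contra! h
  rw [two_pow_le_iff_testBit (Nat.xor_lt_two_pow hx' hy'), Nat.testBit_xor,
    (two_pow_le_iff_testBit hx').1 hx, (two_pow_le_iff_testBit hy').1 hy] at h
  simp at h

theorem ofBits_mod_two_pow (a : Fin (m + 1) → Bool) :
    Nat.ofBits a % 2 ^ m = Nat.ofBits fun j => a j.castSucc := by
  rw [← Nat.ofBits_testBit]
  congr 1
  funext j
  exact Nat.testBit_ofBits_lt a j (by omega)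

theorem exists_ofBits_eq (hx : x < 2 ^ m) : ∃ a : Fin m → Bool, Nat.ofBits a = x :=
  ⟨fun i => x.testBit i, by rw [Nat.ofBits_testBit, Nat.mod_eq_of_lt hx]⟩

end Bits

section XorSubgroups

variable {m n t x : ℕ} {V W : Set ℕ}

theorem mem_xorAdjoin : x ∈ xorAdjoin V t ↔ x ∈ V ∨ t ^^^ x ∈ V :=
  or_congr_right Set.mem_image_equiv

theorem xorAdjoin_two_pow_add {s : ℕ} (hV : ∀ x ∈ V, x < 2 ^ m) (hs : s < 2 ^ m) :
    xorAdjoin V (2 ^ m + s) = V ∪ (2 ^ m + ·) '' (Equiv.xor s '' V) := by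
  rw [xorAdjoin, Set.image_image]
  exact congrArg (V ∪ ·) (Set.image_congr fun x hx => two_pow_add_xor hs (hV x hx))

namespace IsXorSubgroup

theorem mono (hV : IsXorSubgroup m V) (hmn : m ≤ n) : IsXorSubgroup n V where
  lt_two_pow x hx := (hV.lt_two_pow x hx).trans_le (Nat.pow_le_pow_right two_pos hmn)
  zero_mem := hV.zero_mem
  xor_mem := hV.xor_mem

theorem inter_Iio_two_pow (hW : IsXorSubgroup n W) (m : ℕ) :
    IsXorSubgroup m (W ∩ Set.Iio (2 ^ m)) where
  lt_two_pow _ hx := hx.2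
  zero_mem := ⟨hW.zero_mem, Nat.two_pow_pos m⟩
  xor_mem a ha b hb := ⟨hW.xor_mem a ha.1 b hb.1, Nat.xor_lt_two_pow ha.2 hb.2⟩

theorem xorAdjoin (hV : IsXorSubgroup n V) (ht : t < 2 ^ n) :
    IsXorSubgroup n (xorAdjoin V t) where
  lt_two_pow := by
    rintro _ (hx | ⟨y, hy, rfl⟩)
    · exact hV.lt_two_pow _ hx
    · exact Nat.xor_lt_two_pow ht (hV.lt_two_pow y hy)
  zero_mem := Or.inl hV.zero_mem
  xor_mem a ha b hb := by
    rw [mem_xorAdjoin] at *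
    rcases ha with ha | ha <;> rcases hb with hb | hb <;> have hab := hV.xor_mem _ ha _ hb
    · exact Or.inl hab
    · exact Or.inr (by rwa [Nat.xor_left_comm])
    · exact Or.inr (by rwa [← Nat.xor_assoc])
    · exact Or.inl (by rwa [Nat.xor_left_comm, ← Nat.xor_assoc, Nat.xor_xor_cancel_left] at hab)

theorem eq_xorAdjoin_inter_Iio (hW : IsXorSubgroup (m + 1) W) (htW : t ∈ W) (ht : 2 ^ m ≤ t) :
    W = _root_.xorAdjoin (W ∩ Set.Iio (2 ^ m)) t := by
  ext x
  rw [mem_xorAdjoin]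
  constructor
  · intro hx
    rcases lt_or_ge x (2 ^ m) with hlt | hge
    · exact Or.inl ⟨hx, hlt⟩
    · exact Or.inr ⟨hW.xor_mem t htW x hx, xor_lt_two_pow_of_two_pow_le ht (hW.lt_two_pow t htW)
        hge (hW.lt_two_pow x hx)⟩
  · rintro (hx | hx)
    · exact hx.1
    · simpa only [Nat.xor_xor_cancel_left] using hW.xor_mem t htW _ hx.1

end IsXorSubgroup

theorem isXorSubgroup_zero_iff : IsXorSubgroup 0 V ↔ V = {0} := by
  constructor
  · intro hV
    exact Set.eq_singleton_iff_unique_mem.2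
      ⟨hV.zero_mem, fun x hx => Nat.lt_one_iff.1 (hV.lt_two_pow x hx)⟩
  · rintro rfl
    exact ⟨by simp, by simp, by simp⟩

theorem isXorSubgroup_succ_iff :
    IsXorSubgroup (m + 1) W ↔ IsXorSubgroup m W ∨
      ∃ V, IsXorSubgroup m V ∧ ∃ a : Fin m → Bool, W = xorAdjoin V (2 ^ m + Nat.ofBits a) := by
  constructor
  · intro hW
    by_cases hlow : ∀ x ∈ W, x < 2 ^ m
    · exact Or.inl ⟨hlow, hW.zero_mem, hW.xor_mem⟩
    · push Not at hlow
      obtain ⟨t, htW, ht⟩ := hlow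
      have hlt := hW.lt_two_pow t htW
      obtain ⟨a, ha⟩ := exists_ofBits_eq (m := m) (x := t - 2 ^ m) (by omega)
      refine Or.inr ⟨_, hW.inter_Iio_two_pow m, a, ?_⟩
      rw [ha, Nat.add_sub_cancel' ht]
      exact hW.eq_xorAdjoin_inter_Iio htW ht
  · rintro (hW | ⟨V, hV, a, rfl⟩)
    · exact hW.mono m.le_succ
    · have := Nat.ofBits_lt_two_pow a
      exact (hV.mono m.le_succ).xorAdjoin (by omega)

end XorSubgroups

section States

variable {m : ℕ}

theorem ite_pauliX_one_apply_ite (b : Bool) (p q : Prop) [Decidable p] [Decidable q] :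
    (if b then pauliX else 1) (if p then 0 else 1) (if q then 0 else 1) =
      if (decide p ^^ b) = decide q then 1 else 0 := by
  cases b <;> by_cases hp : p <;> by_cases hq : q <;> simp [pauliX, one_fin_two, hp, hq]

theorem xString_eq_permMatrix : ∀ (m : ℕ) (a : Fin m → Bool),
    xString m a = (Equiv.xor (Fin.ofBits a)).permMatrix ℂ
  | 0, a => by rw [xString, show Fin.ofBits a = 0 from rfl, Equiv.xor_zero, permMatrix_one]
  | m + 1, a => by
    ext i j
    have hlt (k : Fin (2 ^ (m + 1))) : decide ((k : ℕ) < 2 ^ m) = !(k : ℕ).testBit m := by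
      rw [Bool.eq_iff_iff, decide_eq_true_iff, ← not_le, two_pow_le_iff_testBit k.isLt,
        Bool.not_eq_true, Bool.not_eq_true']
    have hentry : (j : ℕ) = Nat.ofBits a ^^^ i ↔
        ((!(i : ℕ).testBit m) ^^ a (Fin.last m)) = (!(j : ℕ).testBit m) ∧
          (j : ℕ) % 2 ^ m = (Nat.ofBits fun k => a k.castSucc) ^^^ (i : ℕ) % 2 ^ m := by
      rw [eq_iff_testBit_eq_and_mod_eq j.isLt
          (Nat.xor_lt_two_pow (Nat.ofBits_lt_two_pow a) i.isLt),
        Nat.testBit_xor, Nat.xor_mod_two_pow, ofBits_mod_two_pow,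
        Nat.testBit_ofBits_lt a m m.lt_succ_self, Bool.xor_comm, eq_comm (a := (j : ℕ).testBit m),
        Bool.not_xor, Bool.not_inj_iff]
      rfl
    rw [xString, kron, ite_pauliX_one_apply_ite, xString_eq_permMatrix m]
    simp only [PEquiv.toMatrix_toPEquiv_apply, Pi.single_apply, Equiv.xor_apply, Fin.ext_iff,
      Fin.xor_val_of_two_pow, hlt, hentry, ite_zero_mul_ite_zero, mul_one]

theorem xString_mulVec_cosetState (a : Fin m → Bool) (V : Set ℕ) :
    xString m a *ᵥ cosetState m V = cosetState m (Equiv.xor (Nat.ofBits a) '' V) := by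
  classical
  funext i
  rw [xString_eq_permMatrix, permMatrix_mulVec]
  simp only [Function.comp_apply, cosetState, Set.mem_image_equiv, Equiv.xor_symm,
    Set.ncard_image_of_injective V (Equiv.injective _)]
  simp only [Equiv.xor_apply, Fin.xor_val_of_two_pow]

theorem dirac_cosetState_zero {V : Set ℕ} (hV : ∀ x ∈ V, x < 2 ^ m) :
    dirac (cosetState m V) 0 = cosetState (m + 1) V := by
  funext i
  by_cases hi : (i : ℕ) < 2 ^ m
  · simp [dirac, cosetState, hi]
  · have hiV : (i : ℕ) ∉ V := fun h => hi (hV _ h)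
    simp [dirac, cosetState, hi, hiV]

theorem smul_dirac_cosetState {V W : Set ℕ} (hV : ∀ x ∈ V, x < 2 ^ m) (hW : W.Finite)
    (hVW : W.ncard = V.ncard) :
    (Real.sqrt 2 : ℂ)⁻¹ • dirac (cosetState m V) (cosetState m W) =
      cosetState (m + 1) (V ∪ (2 ^ m + ·) '' W) := by
  classical
  have hdisj : Disjoint V ((2 ^ m + ·) '' W) := by
    rw [Set.disjoint_left]
    rintro _ hx ⟨y, -, rfl⟩
    exact (hV _ hx).not_ge (Nat.le_add_right _ _)
  have hcard : (V ∪ (2 ^ m + ·) '' W).ncard = 2 * V.ncard := by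
    rw [Set.ncard_union_eq hdisj ((Set.finite_lt_nat _).subset hV) (hW.image _),
      Set.ncard_image_of_injective W (add_right_injective _), hVW, two_mul]
  have hamp : (1 / Real.sqrt (2 * V.ncard : ℕ) : ℂ) =
      (Real.sqrt 2 : ℂ)⁻¹ * (1 / Real.sqrt V.ncard) := by
    rw [Nat.cast_mul, Nat.cast_ofNat, Real.sqrt_mul zero_le_two, Complex.ofReal_mul,
      one_div, one_div, mul_inv]
  funext i
  rw [Pi.smul_apply, smul_eq_mul]
  simp only [cosetState, hcard, hamp, dirac, hVW]
  by_cases hi : (i : ℕ) < 2 ^ m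
  · have hmem : (i : ℕ) ∈ V ∪ (2 ^ m + ·) '' W ↔ (i : ℕ) ∈ V := by
      refine or_iff_left ?_
      rintro ⟨y, -, hy⟩
      exact hi.not_ge (hy ▸ Nat.le_add_right _ _)
    simp only [hi, dif_pos, hmem, mul_ite, mul_zero]
  · have hmem : (i : ℕ) ∈ V ∪ (2 ^ m + ·) '' W ↔ (i : ℕ) - 2 ^ m ∈ W := by
      refine (or_iff_right fun h => hi (hV _ h)).trans ⟨?_, fun h => ?_⟩
      · rintro ⟨y, hy, hyi⟩
        rwa [← hyi, Nat.add_sub_cancel_left]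
      · exact ⟨_, h, Nat.add_sub_cancel' (not_lt.1 hi)⟩
    simp only [hi, not_false_eq_true, dif_neg, hmem, mul_ite, mul_zero]

theorem smul_dirac_xString_mulVec_cosetState {V : Set ℕ} (hV : ∀ x ∈ V, x < 2 ^ m)
    (a : Fin m → Bool) :
    (Real.sqrt 2 : ℂ)⁻¹ • dirac (cosetState m V) (xString m a *ᵥ cosetState m V) =
      cosetState (m + 1) (xorAdjoin V (2 ^ m + Nat.ofBits a)) := by
  rw [xString_mulVec_cosetState, xorAdjoin_two_pow_add hV (Nat.ofBits_lt_two_pow a)]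
  exact smul_dirac_cosetState hV (((Set.finite_lt_nat _).subset hV).image _)
    (Set.ncard_image_of_injective V (Equiv.injective _))

theorem subgroupCosetStates_zero : subgroupCosetStates 0 = {1} := by
  have hone : cosetState 0 {0} = 1 := by
    funext i
    simp [cosetState]
  simp only [subgroupCosetStates, isXorSubgroup_zero_iff, Set.ofPred_eq_eq_singleton,
    Set.image_singleton, hone]

theorem subgroupCosetStates_succ (m : ℕ) :
    subgroupCosetStates (m + 1) = towerStep (subgroupCosetStates m) := by
  ext ψ
  constructor
  · rintro ⟨W, hW, rfl⟩
    rcases isXorSubgroup_succ_iff.1 hW with hW | ⟨V, hV, a, rfl⟩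
    · exact Or.inl ⟨_, ⟨W, hW, rfl⟩, (dirac_cosetState_zero hW.lt_two_pow).symm⟩
    · exact Or.inr ⟨_, ⟨V, hV, rfl⟩, a,
        (smul_dirac_xString_mulVec_cosetState hV.lt_two_pow a).symm⟩
  · rintro (⟨_, ⟨V, hV, rfl⟩, rfl⟩ | ⟨_, ⟨V, hV, rfl⟩, a, rfl⟩)
    · exact ⟨V, isXorSubgroup_succ_iff.2 (Or.inl hV),
        (dirac_cosetState_zero hV.lt_two_pow).symm⟩
    · exact ⟨_, isXorSubgroup_succ_iff.2 (Or.inr ⟨V, hV, a, rfl⟩),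
        (smul_dirac_xString_mulVec_cosetState hV.lt_two_pow a).symm⟩

theorem Xset_one : Xset 1 = towerStep {(1 : Fin (2 ^ 0) → ℂ)} := by
  have hzero : (fun i => if (i : ℕ) = 0 then 1 else 0 : Fin (2 ^ 1) → ℂ) =
      dirac (m := 0) 1 0 := by
    funext i
    simp [dirac]
  have hplus : (fun _ => (Real.sqrt 2 : ℂ)⁻¹ : Fin (2 ^ 1) → ℂ) =
      (Real.sqrt 2 : ℂ)⁻¹ • dirac (m := 0) 1 1 := by
    funext i
    simp [dirac]
  rw [Xset, hzero, hplus]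
  ext ψ
  simp [towerStep, xString, or_comm]

theorem Xset_add_two (k : ℕ) : Xset (k + 2) = towerStep (Xset (k + 1)) := rfl

end States

/-- The tower construction with `X`-string labels produces exactly the coset states
of subgroups of `({0,1}^n, XOR)` (bitstrings encoded as naturals `< 2^n`). -/
theorem Xset_eq_subgroup_coset_states (n : ℕ) (hn : 1 ≤ n) :
    Xset n = {ψ : Fin (2 ^ n) → ℂ | ∃ V : Set ℕ,
      (∀ x ∈ V, x < 2 ^ n) ∧ 0 ∈ V ∧ (∀ a ∈ V, ∀ b ∈ V, a ^^^ b ∈ V) ∧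
      ψ = cosetState n V} := by
  suffices h : Xset n = subgroupCosetStates n by
    rw [h]
    ext ψ
    constructor
    · rintro ⟨V, hV, rfl⟩
      exact ⟨V, hV.lt_two_pow, hV.zero_mem, hV.xor_mem, rfl⟩
    · rintro ⟨V, hlt, hzero, hxor, rfl⟩
      exact ⟨V, ⟨hlt, hzero, hxor⟩, rfl⟩
  induction n, hn using Nat.le_induction with
  | base => rw [Xset_one, ← subgroupCosetStates_zero, ← subgroupCosetStates_succ]
  | succ n hn ih =>
    obtain ⟨k, rfl⟩ := Nat.exists_eq_add_of_le' hn
    rw [Xset_add_two, ih, ← subgroupCosetStates_succ]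

end
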